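/- Let P be a complete calculation of the recompute-restricted red-blue pebble game on a CDAG C = (I, V, E, O) using at most S red pebbles, and let P' be a consecutive subsequence of the moves of P containing at most S moves of type R1. Let V' be the set of vertices fired by rule R3-NR during P'. Then |In(V')| ≤ 2S, where In(V') is the set of vertices of V ∖ V' having at least one successor in V'. -/

import Mathlib

/-!
Red-blue pebble game on computational DAGs (Hong & Kung), following
"On Characterizing the Data Access Complexity of Programs".

A CDAG is given by a vertex type `V`, an edge relation `E : V → V → Prop`
(required acyclic where relevant), an input set `I : Finset V` and an output
set `O : Finset V`.
-/

/-- A move of the red-blue pebble game. -/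
inductive Move (V : Type*) where
  | input : V → Move V
  | output : V → Move V
  | compute : V → Move V
  | delete : V → Move V
deriving DecidableEq

namespace Move

variable {V : Type*}

/-- The vertex involved in a move. -/
def vertex : Move V → V
  | .input v => v
  | .output v => v
  | .compute v => v
  | .delete v => v

/-- Is the move an I/O move (rule R1 or R2)? -/
def isIO : Move V → Bool
  | .input _ => true
  | .output _ => true
  | _ => false

/-- Is the move an R1 (input) move? -/
def isInput : Move V → Bool
  | .input _ => true
  | _ => false

/-- Is the move an R2 (output) move? -/
def isOutput : Move V → Bool
  | .output _ => true
  | _ => false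

end Move

/-- A configuration of the game: the sets of vertices carrying red resp. blue pebbles. -/
structure Config (V : Type*) where
  red : Finset V
  blue : Finset V

variable {V : Type*} [DecidableEq V]

/-- The effect of a move on a configuration. -/
def applyMove (c : Config V) : Move V → Config V
  | .input v => ⟨insert v c.red, c.blue⟩
  | .output v => ⟨c.red, insert v c.blue⟩
  | .compute v => ⟨insert v c.red, c.blue⟩
  | .delete v => ⟨c.red.erase v, c.blue⟩

/-- Validity of a single move in a configuration:
R1 requires a blue pebble, R2 a red pebble, R3 (compute) requires `v ∉ I` and red pebbles
on all immediate predecessors, R4 requires a red pebble. -/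
def ValidMove (E : V → V → Prop) (I : Finset V) (c : Config V) : Move V → Prop
  | .input v => v ∈ c.blue
  | .output v => v ∈ c.red
  | .compute v => v ∉ I ∧ ∀ u, E u v → u ∈ c.red
  | .delete v => v ∈ c.red

/-- Validity of a sequence of moves starting from a configuration, with at most `S`
red pebbles in use at any time. -/
def ValidSeq (E : V → V → Prop) (I : Finset V) (S : ℕ) : List (Move V) → Config V → Prop
  | [], _ => True
  | m :: ms, c => ValidMove E I c m ∧ (applyMove c m).red.card ≤ S ∧
      ValidSeq E I S ms (applyMove c m)

/-- The initial configuration: a blue pebble on each input vertex, no red pebbles. -/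
def initConfig (I : Finset V) : Config V := ⟨∅, I⟩

/-- The configuration after playing the whole sequence of moves. -/
def finalConfig (I : Finset V) (P : List (Move V)) : Config V := P.foldl applyMove (initConfig I)

/-- The I/O cost of a calculation: the number of R1 and R2 moves. -/
def ioCost {V : Type*} (P : List (Move V)) : ℕ := (P.filter Move.isIO).length

/-- A complete calculation of the (standard Hong–Kung) red-blue pebble game with at most
`S` red pebbles: a valid sequence of moves from the initial configuration ending with
blue pebbles on all output vertices. -/
def CompleteCalc (E : V → V → Prop) (I O : Finset V) (S : ℕ) (P : List (Move V)) : Prop :=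
  ValidSeq E I S P (initConfig I) ∧ O ⊆ (finalConfig I P).blue

/-- A complete calculation of the red-blue pebble game with flexible input/output labeling,
on the CDAG with vertex set `Vt`: additionally, all moves involve vertices of `Vt` and
every non-input vertex of `Vt` is fired (rule R3) at least once. -/
def CompleteCalcFlex (Vt : Finset V) (E : V → V → Prop) (I O : Finset V) (S : ℕ)
    (P : List (Move V)) : Prop :=
  (∀ m ∈ P, m.vertex ∈ Vt) ∧
  ValidSeq E I S P (initConfig I) ∧
  (∀ v ∈ Vt, v ∉ I → Move.compute v ∈ P) ∧
  O ⊆ (finalConfig I P).blue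

/-- A complete calculation of the recompute-restricted (no-repebbling) red-blue pebble game:
every non-input vertex is fired (rule R3-NR) exactly once. -/
def CompleteCalcNR (E : V → V → Prop) (I O : Finset V) (S : ℕ) (P : List (Move V)) : Prop :=
  ValidSeq E I S P (initConfig I) ∧
  (∀ v : V, v ∉ I → P.count (Move.compute v) = 1) ∧
  O ⊆ (finalConfig I P).blue

/-- No cyclic dependence among the subsets `Vs i`: the relation
"some edge of `E` goes from a vertex of `Vs i` to a vertex of `Vs j`" (for `i ≠ j`)
generates no cycle. -/
def NoCyclicDep (E : V → V → Prop) {h : ℕ} (Vs : Fin h → Finset V) : Prop :=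
  ∀ i, ¬ Relation.TransGen (fun i j => i ≠ j ∧ ∃ u ∈ Vs i, ∃ v ∈ Vs j, E u v) i i

/-- `D` is a dominator set of `W`: every (directed) path from a vertex of `I` to a
vertex of `W` contains a vertex of `D`. -/
def Dominator (E : V → V → Prop) (I D W : Finset V) : Prop :=
  ∀ (p : List V) (hp : p ≠ []), p.Chain' E → p.head hp ∈ I → p.getLast hp ∈ W →
    ∃ v ∈ p, v ∈ D

/-- The minimum set of `W`: the vertices of `W` all of whose successors lie outside `W`. -/
def MinSet (E : V → V → Prop) (W : Finset V) : Set V :=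
  {v | v ∈ W ∧ ∀ u, E v u → u ∉ W}

/-- The input set of `W`: vertices outside `W` with at least one successor in `W`. -/
def InSet (E : V → V → Prop) (W : Set V) : Set V := {u | u ∉ W ∧ ∃ v ∈ W, E u v}

/-- The output set of `W`: vertices of `W` that belong to `O` or have a successor
outside `W`. -/
def OutSet (E : V → V → Prop) (O : Finset V) (W : Set V) : Set V :=
  {v | v ∈ W ∧ (v ∈ O ∨ ∃ u, E v u ∧ u ∉ W)}

variable [Fintype V]

/-- A `T`-partition of the CDAG (Hong & Kung): pairwise disjoint subsets covering `V`,
with no cyclic dependence, each having a dominator set of at most `T` vertices and a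
minimum set of at most `T` vertices. -/
def TPartition (E : V → V → Prop) (I : Finset V) (T : ℕ) {h : ℕ}
    (Vs : Fin h → Finset V) : Prop :=
  (∀ i j, i ≠ j → Disjoint (Vs i) (Vs j)) ∧
  (Finset.univ.biUnion Vs = Finset.univ) ∧
  NoCyclicDep E Vs ∧
  (∀ i, ∃ D : Finset V, D.card ≤ T ∧ Dominator E I D (Vs i)) ∧
  (∀ i, (MinSet E (Vs i)).ncard ≤ T)

/-- A `T`-NR-partition of the CDAG: pairwise disjoint subsets covering `V ∖ I`,
with no cyclic dependence, each having input set and output set of at most `T` vertices. -/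
def TNRPartition (E : V → V → Prop) (I O : Finset V) (T : ℕ) {h : ℕ}
    (Vs : Fin h → Finset V) : Prop :=
  (∀ i j, i ≠ j → Disjoint (Vs i) (Vs j)) ∧
  (Finset.univ.biUnion Vs = Finset.univ \ I) ∧
  NoCyclicDep E Vs ∧
  (∀ i, (InSet E (↑(Vs i) : Set V)).ncard ≤ T) ∧
  (∀ i, (OutSet E O (↑(Vs i) : Set V)).ncard ≤ T)

/-!
A vertex can carry a red pebble during the segment `P'` only if it carried one when the segment
began, or was loaded (R1) or fired (R3) during the segment. Every vertex of `In(V')` carries a red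
pebble when one of its successors is fired, and is not itself fired in `P'`; so it is one of the at
most `S` initially red vertices or one of the at most `S` loaded ones.
-/

section PebbleGame

variable {V : Type*}

theorem Move.encard_setOf_input_mem_le (P : List (Move V)) :
    {v | Move.input v ∈ P}.encard ≤ (P.filter Move.isInput).length := by
  classical
  have loaded_subset :
      {v | Move.input v ∈ P} ⊆ ↑((P.filter Move.isInput).map Move.vertex).toFinset := by
    intro v hv
    exact List.mem_toFinset.2 (List.mem_map_of_mem (List.mem_filter.2 ⟨hv, rfl⟩))
  calc {v | Move.input v ∈ P}.encard
      ≤ (((P.filter Move.isInput).map Move.vertex).toFinset.card : ℕ∞) := by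
        simpa only [Set.encard_coe_eq_coe_finsetCard] using Set.encard_le_encard loaded_subset
    _ ≤ ((P.filter Move.isInput).length : ℕ∞) := by
        exact_mod_cast (List.toFinset_card_le _).trans_eq (List.length_map _)

variable [DecidableEq V] {E : V → V → Prop} {I : Finset V} {S : ℕ} {P : List (Move V)}
  {c : Config V} {u : V}

theorem mem_red_or_eq_of_mem_red_applyMove {m : Move V} (hu : u ∈ (applyMove c m).red) :
    u ∈ c.red ∨ m = .input u ∨ m = .compute u := by
  cases m <;> simp only [applyMove, Finset.mem_insert, Finset.mem_erase] at hu <;> grind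

theorem mem_red_or_mem_of_mem_red_foldl_applyMove (hu : u ∈ (P.foldl applyMove c).red) :
    u ∈ c.red ∨ .input u ∈ P ∨ .compute u ∈ P := by
  induction P generalizing c with
  | nil => exact .inl hu
  | cons m P ih =>
    rcases ih hu with red | loaded | fired
    · rcases mem_red_or_eq_of_mem_red_applyMove red with red | rfl | rfl <;> simp [*]
    · exact .inr (.inl (.tail _ loaded))
    · exact .inr (.inr (.tail _ fired))

theorem validSeq_append {Q : List (Move V)} :
    ValidSeq E I S (P ++ Q) c ↔ ValidSeq E I S P c ∧ ValidSeq E I S Q (P.foldl applyMove c) := by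
  induction P generalizing c with
  | nil => simp [ValidSeq]
  | cons m P ih => simp [ValidSeq, ih, and_assoc]

theorem ValidSeq.card_red_foldl_le (h : ValidSeq E I S P c) (hc : c.red.card ≤ S) :
    (P.foldl applyMove c).red.card ≤ S := by
  induction P generalizing c with
  | nil => exact hc
  | cons m P ih => exact ih h.2.2 h.2.1

theorem ValidSeq.mem_red_or_mem_of_compute_mem {v : V} (h : ValidSeq E I S P c) (huv : E u v)
    (hv : .compute v ∈ P) : u ∈ c.red ∨ .input u ∈ P ∨ .compute u ∈ P := by
  obtain ⟨before, after, rfl⟩ := List.append_of_mem hv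
  have red_at_firing : u ∈ (before.foldl applyMove c).red := (validSeq_append.1 h).2.1.2 u huv
  exact (mem_red_or_mem_of_mem_red_foldl_applyMove red_at_firing).imp_right
    (.imp (List.mem_append_left _) (List.mem_append_left _))

theorem ValidSeq.inSet_subset (h : ValidSeq E I S P c) :
    InSet E {v | .compute v ∈ P} ⊆ ↑c.red ∪ {u | .input u ∈ P} := by
  rintro u ⟨not_fired, v, hv, huv⟩
  rcases h.mem_red_or_mem_of_compute_mem huv hv with red | loaded | fired
  · exact .inl red
  · exact .inr loaded
  · exact absurd fired not_fired

theorem stmt6_general {pre P' post : List (Move V)} (hc : c.red.card ≤ S)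
    (hP : ValidSeq E I S (pre ++ P' ++ post) c) :
    (InSet E {v | .compute v ∈ P'}).encard ≤ S + (P'.filter Move.isInput).length := by
  obtain ⟨hpre, hP'⟩ := validSeq_append.1 (validSeq_append.1 hP).1
  calc (InSet E {v | .compute v ∈ P'}).encard
      ≤ (↑(pre.foldl applyMove c).red ∪ {u | .input u ∈ P'} : Set V).encard :=
        Set.encard_le_encard hP'.inSet_subset
    _ ≤ (pre.foldl applyMove c).red.card + {u | .input u ∈ P'}.encard := by
        rw [← Set.encard_coe_eq_coe_finsetCard]
        exact Set.encard_union_le _ _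
    _ ≤ S + (P'.filter Move.isInput).length := by
        gcongr
        · exact hpre.card_red_foldl_le hc
        · exact Move.encard_setOf_input_mem_le P'

end PebbleGame

/-- If `P'` is a consecutive subsequence of a complete calculation of the
recompute-restricted game with at most `S` red pebbles, containing at most `S` moves of
type R1, and `V'` is the set of vertices fired during `P'`, then `|In(V')| ≤ 2S`. -/
theorem stmt6 {V : Type*} [Fintype V] [DecidableEq V]
    (E : V → V → Prop) (I O : Finset V)
    (hdag : ∀ v : V, ¬ Relation.TransGen E v v)
    (S : ℕ) (pre P' post : List (Move V))
    (hP : CompleteCalcNR E I O S (pre ++ P' ++ post))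
    (hR1 : (P'.filter Move.isInput).length ≤ S) :
    (InSet E {v : V | Move.compute v ∈ P'}).ncard ≤ 2 * S := by
  refine (Set.encard_le_coe_iff_finite_ncard_le.1 ((stmt6_general (Nat.zero_le S) hP.1).trans ?_)).2
  norm_cast; omega
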